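/- Let G be a forest (a finite simple graph with no cycles) with at least one edge, let v be a pendant vertex of G, and let w be the neighbor of v. Then w is a shedding vertex of the independence complex Δ_G, one has link_{Δ_G}(w) = Δ_{G∖N_G[w]} and del_{Δ_G}(w) = Δ_{G∖w}, and consequently Δ_G is vertex decomposable. -/

import Mathlib

open MvPolynomial

namespace Paper

/-- An (abstract) simplicial complex: a nonempty, downward closed collection of
finite subsets of the vertex set. -/
def IsComplex {n : ℕ} (Δ : Set (Finset (Fin n))) : Prop :=
  Δ.Nonempty ∧ ∀ F ∈ Δ, ∀ G, G ⊆ F → G ∈ Δ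

/-- The deletion `del_Δ(v)`. -/
def delC {n : ℕ} (Δ : Set (Finset (Fin n))) (v : Fin n) : Set (Finset (Fin n)) :=
  {G ∈ Δ | v ∉ G}

/-- The link `link_Δ(v)`. -/
def linkC {n : ℕ} (Δ : Set (Finset (Fin n))) (v : Fin n) : Set (Finset (Fin n)) :=
  {G | G ∈ Δ ∧ v ∉ G ∧ insert v G ∈ Δ}

/-- A facet is a maximal face. -/
def IsFacet {n : ℕ} (Δ : Set (Finset (Fin n))) (F : Finset (Fin n)) : Prop :=
  F ∈ Δ ∧ ∀ G ∈ Δ, F ⊆ G → G = F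

/-- A vertex `v` of `Δ` is a shedding vertex if every facet of `del_Δ(v)` is a facet
of `Δ`. -/
def IsSheddingVertex {n : ℕ} (Δ : Set (Finset (Fin n))) (v : Fin n) : Prop :=
  {v} ∈ Δ ∧ ∀ F, IsFacet (delC Δ v) F → IsFacet Δ F

/-- `Δ` is a simplex: it has a unique maximal face containing all faces. -/
def IsSimplexC {n : ℕ} (Δ : Set (Finset (Fin n))) : Prop :=
  ∃ F ∈ Δ, ∀ G ∈ Δ, G ⊆ F

/-- Vertex decomposability, defined recursively. -/
inductive IsVertexDecomposable {n : ℕ} : Set (Finset (Fin n)) → Prop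
  | simplex {Δ : Set (Finset (Fin n))} (h : IsComplex Δ) (hs : IsSimplexC Δ) :
      IsVertexDecomposable Δ
  | step {Δ : Set (Finset (Fin n))} (h : IsComplex Δ) (v : Fin n)
      (hv : IsSheddingVertex Δ v)
      (h1 : IsVertexDecomposable (linkC Δ v)) (h2 : IsVertexDecomposable (delC Δ v)) :
      IsVertexDecomposable Δ

/-- The independence complex of a graph. -/
def indepComplex {n : ℕ} (G : SimpleGraph (Fin n)) : Set (Finset (Fin n)) :=
  {A | ∀ u ∈ A, ∀ v ∈ A, ¬ G.Adj u v}

/-- The independence complex of the graph `G ∖ S` obtained by deleting the vertices in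
`S` (its faces are the independent sets of `G` avoiding `S`). -/
def indepComplexDel {n : ℕ} (G : SimpleGraph (Fin n)) (S : Set (Fin n)) :
    Set (Finset (Fin n)) :=
  {A | (∀ x ∈ A, x ∉ S) ∧ ∀ u ∈ A, ∀ v ∈ A, ¬ G.Adj u v}

/-!
If `N[v] ⊆ N[w]` for adjacent vertices `v` and `w`, then `w` can be exchanged for `v` in every
independent set containing `w`, so no facet of `del w` extends to a face through `w`. The link and
the deletion of `w` are again independence complexes of induced subgraphs, so induction applies as
long as every induced subgraph with an edge has such a pair; in a forest, an end of a longest path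
together with its neighbor provides one.
-/

/-- Every induced subgraph of `G` with an edge has adjacent vertices `v` and `w` with
`N[v] ⊆ N[w]`, neighborhoods being taken in the subgraph. This is the property of forests that makes
their independence complexes vertex decomposable; for finite graphs it is equivalent to chordality.
Induced subgraphs are given by their vertex sets `s`. -/
def IsHereditarilyDominated {V : Type*} (G : SimpleGraph V) : Prop :=
  ∀ s : Set V, ¬ G.IsIndepSet s →
    ∃ v ∈ s, ∃ w ∈ s, G.Adj v w ∧ G.neighborSet v ∩ s ⊆ insert w (G.neighborSet w)

section Forest

variable {V : Type*} {G : SimpleGraph V}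

theorem exists_existsUnique_adj_of_isAcyclic [Finite G.edgeSet] (hG : G.IsAcyclic)
    (hne : G ≠ ⊥) : ∃ v, ∃! w, G.Adj v w := by
  obtain ⟨a, b, hab⟩ := SimpleGraph.ne_bot_iff_exists_adj.mp hne
  have : Nonempty V := ⟨a⟩
  obtain ⟨v, _, p, hp, hmax⟩ :=
    SimpleGraph.Walk.exists_isPath_forall_isPath_length_le_length G
  have hnil : ¬ p.Nil := fun h ↦ by
    simpa [SimpleGraph.Walk.length_eq_zero_iff.mpr h] using
      hmax a b hab.toWalk (SimpleGraph.Walk.IsPath.of_adj hab)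
  refine ⟨v, p.snd, p.adj_snd hnil, fun u hvu ↦ hG.eq_snd_of_adj_start hp hvu ?_⟩
  by_contra hu
  simpa using hmax _ _ (p.cons hvu.symm) (hp.cons hu)

theorem isHereditarilyDominated_of_isAcyclic [Finite V] (hG : G.IsAcyclic) :
    IsHereditarilyDominated G := by
  intro s hs
  have hne : G.induce s ≠ ⊥ := by
    intro hbot
    refine hs fun a ha b hb _ hab ↦ ?_
    exact SimpleGraph.eq_bot_iff_forall_not_adj.mp hbot ⟨a, ha⟩ ⟨b, hb⟩ hab
  obtain ⟨v, w, hvw, huniq⟩ := exists_existsUnique_adj_of_isAcyclic (hG.induce s) hne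
  refine ⟨v, v.2, w, w.2, hvw, fun u ⟨hvu, hu⟩ ↦ Or.inl ?_⟩
  exact congrArg Subtype.val (huniq ⟨u, hu⟩ hvu)

end Forest

section IndependenceComplex

variable {n : ℕ}

theorem isSheddingVertex_of_forall_exists_exchange {Δ : Set (Finset (Fin n))} {w : Fin n}
    (hw : {w} ∈ Δ) (hexch : ∀ A ∈ Δ, w ∈ A → ∃ v ∉ A, insert v (A.erase w) ∈ Δ) :
    IsSheddingVertex Δ w := by
  refine ⟨hw, fun F ⟨⟨hF, hwF⟩, hmax⟩ ↦ ⟨hF, fun A hA hFA ↦ ?_⟩⟩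
  by_cases hwA : w ∈ A
  · obtain ⟨v, hvA, hv⟩ := hexch A hA hwA
    have hne : w ≠ v := fun h ↦ hvA (h ▸ hwA)
    have hFv : F ⊆ insert v (A.erase w) :=
      (Finset.subset_erase.mpr ⟨hFA, hwF⟩).trans (Finset.subset_insert _ _)
    have heq : insert v (A.erase w) = F := hmax _ ⟨hv, by simp [hne]⟩ hFv
    exact absurd (hFA (heq ▸ Finset.mem_insert_self _ _)) hvA
  · exact hmax A ⟨hA, hwA⟩ hFA

theorem indepComplexDel_empty (G : SimpleGraph (Fin n)) :
    indepComplexDel G ∅ = indepComplex G := by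
  simp [indepComplexDel, indepComplex]

variable {G : SimpleGraph (Fin n)} {S : Set (Fin n)}

theorem isComplex_indepComplexDel : IsComplex (indepComplexDel G S) :=
  ⟨⟨∅, by simp [indepComplexDel]⟩, fun _ hF _ hAF ↦
    ⟨fun x hx ↦ hF.1 x (hAF hx), fun u hu v hv ↦ hF.2 u (hAF hu) v (hAF hv)⟩⟩

theorem isSimplexC_indepComplexDel (hS : G.IsIndepSet Sᶜ) :
    IsSimplexC (indepComplexDel G S) := by
  refine ⟨Sᶜ.toFinite.toFinset, ⟨by simp, fun u hu v hv huv ↦ ?_⟩, fun A hA x hx ↦ ?_⟩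
  · exact hS (by simpa using hu) (by simpa using hv) huv.ne huv
  · simpa using hA.1 x hx

theorem delC_indepComplexDel (w : Fin n) :
    delC (indepComplexDel G S) w = indepComplexDel G (S ∪ {w}) := by
  ext A
  simp only [delC, indepComplexDel, Set.mem_ofPred_eq, Set.mem_union, Set.mem_singleton_iff]
  grind

theorem linkC_indepComplexDel {w : Fin n} (hw : w ∉ S) :
    linkC (indepComplexDel G S) w = indepComplexDel G (S ∪ (G.neighborSet w ∪ {w})) := by
  ext A
  simp only [linkC, indepComplexDel, Set.mem_ofPred_eq, Set.mem_union, Set.mem_singleton_iff,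
    SimpleGraph.mem_neighborSet, Finset.mem_insert]
  grind [G.adj_comm, G.irrefl]

theorem isSheddingVertex_indepComplexDel {v w : Fin n} (hv : v ∉ S) (hw : w ∉ S)
    (hvw : G.Adj v w) (hN : G.neighborSet v ∩ Sᶜ ⊆ insert w (G.neighborSet w)) :
    IsSheddingVertex (indepComplexDel G S) w := by
  refine isSheddingVertex_of_forall_exists_exchange ⟨by simpa using hw, by simp⟩ ?_
  intro A ⟨hAS, hA⟩ hwA
  have hnot_adj : ∀ u ∈ A.erase w, ¬ G.Adj v u := by
    intro u hu hvu
    obtain ⟨hne, huA⟩ := Finset.mem_erase.mp hu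
    exact (hN ⟨hvu, hAS u huA⟩).elim hne (hA w hwA u huA)
  refine ⟨v, fun hvA ↦ hA v hvA w hwA hvw, ?_, ?_⟩
  · grind
  · grind [G.adj_comm, G.irrefl]

theorem isVertexDecomposable_indepComplexDel (hG : IsHereditarilyDominated G) (S : Set (Fin n)) :
    IsVertexDecomposable (indepComplexDel G S) := by
  induction S using WellFoundedGT.induction with
  | ind S ih =>
    by_cases hS : G.IsIndepSet Sᶜ
    · exact .simplex isComplex_indepComplexDel (isSimplexC_indepComplexDel hS)
    obtain ⟨v, hv, w, hw, hvw, hN⟩ := hG Sᶜ hS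
    refine .step isComplex_indepComplexDel w (isSheddingVertex_indepComplexDel hv hw hvw hN) ?_ ?_
    · rw [linkC_indepComplexDel hw]
      exact ih _ (Set.ssubset_union_left_iff.mpr fun h ↦ hw (h (by simp)))
    · rw [delC_indepComplexDel]
      exact ih _ (Set.ssubset_union_left_iff.mpr fun h ↦ hw (h rfl))

end IndependenceComplex

theorem statement_19_general {n : ℕ} {G : SimpleGraph (Fin n)} (hG : IsHereditarilyDominated G)
    {v w : Fin n} (hvw : G.Adj v w) (hN : G.neighborSet v ⊆ insert w (G.neighborSet w)) :
    IsSheddingVertex (indepComplex G) w ∧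
    linkC (indepComplex G) w = indepComplexDel G (G.neighborSet w ∪ {w}) ∧
    delC (indepComplex G) w = indepComplexDel G {w} ∧
    IsVertexDecomposable (indepComplex G) := by
  rw [← indepComplexDel_empty]
  refine ⟨?_, ?_, ?_, isVertexDecomposable_indepComplexDel hG ∅⟩
  · exact isSheddingVertex_indepComplexDel (Set.notMem_empty v) (Set.notMem_empty w) hvw
      (Set.inter_subset_left.trans hN)
  · rw [linkC_indepComplexDel (Set.notMem_empty w), Set.empty_union]
  · rw [delC_indepComplexDel, Set.empty_union]

/-- Let `G` be a forest with at least one edge, `v` a pendant vertex of `G` and `w`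
the neighbor of `v`. Then `w` is a shedding vertex of the independence complex `Δ_G`,
`link_(Δ_G)(w) = Δ_(G ∖ N_G[w])`, `del_(Δ_G)(w) = Δ_(G ∖ w)`, and `Δ_G` is vertex
decomposable. -/
theorem statement_19 (n : ℕ) (G : SimpleGraph (Fin n)) (hforest : G.IsAcyclic)
    (hedge : ∃ a b : Fin n, G.Adj a b) (v : Fin n) (hpendant : ∃! u, G.Adj v u)
    (w : Fin n) (hw : G.Adj v w) :
    IsSheddingVertex (indepComplex G) w ∧
    linkC (indepComplex G) w = indepComplexDel G (G.neighborSet w ∪ {w}) ∧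
    delC (indepComplex G) w = indepComplexDel G {w} ∧
    IsVertexDecomposable (indepComplex G) :=
  statement_19_general (isHereditarilyDominated_of_isAcyclic hforest) hw
    fun _ hu ↦ Or.inl (hpendant.unique hu hw)

end Paper
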